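/- Let x be a one-sided infinite word over a finite nonempty alphabet A. Then p_x(n) = O(n) if and only if Fac(x) ⊆ S^2 for some language S ⊆ A* of bounded complexity (i.e., with limsup_n p_S(n) < +∞). -/

import Mathlib

open scoped ENNReal Pointwise

universe u

variable {A : Type u}

/-- The factor of `x` of length `n` starting at position `i`. -/
def wordSeg (x : ℕ → A) (i n : ℕ) : List A := (List.range n).map fun j => x (i + j)

/-- The set of finite factors of a one-sided infinite word (including the empty word). -/
def Fac (x : ℕ → A) : Set (List A) := {u | ∃ i n, u = wordSeg x i n}

/-- The factor of a two-sided word `x` of length `n` starting at position `i`. -/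
def wordSegZ (x : ℤ → A) (i : ℤ) (n : ℕ) : List A := (List.range n).map fun j => x (i + j)

/-- The set of finite factors of a two-sided infinite word (including the empty word). -/
def FacZ (x : ℤ → A) : Set (List A) := {u | ∃ (i : ℤ) (n : ℕ), u = wordSegZ x i n}

/-- The complexity of a language: the number of words of length `n` in it. -/
noncomputable def complexity (L : Set (List A)) (n : ℕ) : ℕ :=
  {u ∈ L | u.length = n}.ncard

/-- The accumulative complexity `p*_L(n) = Σ_{i=0}^{n} p_L(i)`. -/
noncomputable def accComplexity (L : Set (List A)) (n : ℕ) : ℕ :=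
  ∑ i ∈ Finset.range (n + 1), complexity L i

/-- Concatenation (product) of two languages. -/
def prodL (S T : Set (List A)) : Set (List A) := {w | ∃ s ∈ S, ∃ t ∈ T, w = s ++ t}

/-- `powL S k` = `S^k`, the set of concatenations of `k` elements of `S`. -/
def powL (S : Set (List A)) : ℕ → Set (List A)
  | 0 => {([] : List A)}
  | k + 1 => prodL (powL S k) S

/-- `f(n) = O(n^α)`. -/
def PolyBound (f : ℕ → ℕ) (α : ℝ) : Prop :=
  ∃ C : ℝ, ∀ n : ℕ, 1 ≤ n → (f n : ℝ) ≤ C * (n : ℝ) ^ α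

/-- The `α`-dimension `d_α(L)`: infimum of the integers `k ≥ 1` such that `L ⊆ S^k`
for some language `S` with `p_S(n) = O(n^α)`, with `inf ∅ = ⊤`. -/
noncomputable def polyDim (α : ℝ) (L : Set (List A)) : ℕ∞ :=
  sInf {k : ℕ∞ | ∃ m : ℕ, k = m ∧ 1 ≤ m ∧
    ∃ S : Set (List A), PolyBound (complexity S) α ∧ L ⊆ powL S m}

/-- The accumulative `α`-dimension `d*_α(L)`. -/
noncomputable def polyDimStar (α : ℝ) (L : Set (List A)) : ℕ∞ :=
  sInf {k : ℕ∞ | ∃ m : ℕ, k = m ∧ 1 ≤ m ∧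
    ∃ S : Set (List A), PolyBound (accComplexity S) α ∧ L ⊆ powL S m}

/-- The cost `c(L)`: infimum of the `α ≥ 0` with `d_α(L) < +∞`, with `inf ∅ = ⊤`. -/
noncomputable def cost (L : Set (List A)) : ℝ≥0∞ :=
  sInf {a : ℝ≥0∞ | ∃ α : ℝ, 0 ≤ α ∧ a = ENNReal.ofReal α ∧ polyDim α L ≠ ⊤}

/-- A one-sided word is ultimately periodic if it is of the form `u v v v ⋯`. -/
def UltimatelyPeriodic (x : ℕ → A) : Prop :=
  ∃ N p : ℕ, 0 < p ∧ ∀ n : ℕ, N ≤ n → x (n + p) = x n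

/-- A two-sided word is eventually periodic if it is periodic far enough to the right
and far enough to the left. -/
def EventuallyPeriodicZ (x : ℤ → A) : Prop :=
  (∃ p : ℕ, 0 < p ∧ ∃ N : ℤ, ∀ n : ℤ, N ≤ n → x (n + p) = x n) ∧
  (∃ p : ℕ, 0 < p ∧ ∃ N : ℤ, ∀ n : ℤ, n ≤ N → x (n - p) = x n)

/-- A one-sided word is recurrent if each of its factors occurs infinitely often. -/
def Recurrent (x : ℕ → A) : Prop :=
  ∀ u ∈ Fac x, ∀ N : ℕ, ∃ i : ℕ, N ≤ i ∧ u = wordSeg x i u.length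

/-- `u` is a right special factor for the language `F`. -/
def RightSpecial (F : Set (List A)) (u : List A) : Prop :=
  u ∈ F ∧ ∃ a b : A, a ≠ b ∧ u ++ [a] ∈ F ∧ u ++ [b] ∈ F

/-- `M` is a `D`-marker set for a word with factor set `F`: every factor of length
at least `D n` contains a factor of length `n` belonging to `M`. -/
def MarkerSet (D : ℕ) (M F : Set (List A)) : Prop :=
  ∀ n : ℕ, 1 ≤ n → ∀ u ∈ F, D * n ≤ u.length →
    ∃ v ∈ M, v.length = n ∧ v <:+: u

/-- A language is factorial if it contains all factors of its members. -/
def IsFactorial (S : Set (List A)) : Prop := ∀ u ∈ S, ∀ v : List A, v <:+: u → v ∈ S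

/-- The bound `Σ_{k ∈ I_n ∩ ℕ} p_M(2^k)(1 + 4 p(3n)/2^k)` where
`I_n = (log₂(n/(2D)), log₂(2n)]`, i.e. the sum is over natural `k` with
`n/(2D) < 2^k ≤ 2n`. -/
noncomputable def markerBound (M F : Set (List A)) (D n : ℕ) : ℝ :=
  ∑ k ∈ (Finset.range (2 * n + 2)).filter (fun k => n < 2 * D * 2 ^ k ∧ 2 ^ k ≤ 2 * n),
    (complexity M (2 ^ k) : ℝ) * (1 + 4 * (complexity F (3 * n) : ℝ) / 2 ^ k)

-- The word `u = ∏_{i=1}^{∞} a b^i = a b a b b a b b b ⋯` over `{a,b}`, with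
-- `a = false`, `b = true`: position `n` carries an `a` iff `n = (i-1)(i+2)/2` for some
-- `i ≥ 1`, i.e. iff `2n = m(m+3)` for some `m ≥ 0`.
open Classical in
noncomputable def uWord (n : ℕ) : Bool :=
  if ∃ m : ℕ, 2 * n = m * (m + 3) then false else true

/-!
If `Fac x ⊆ S²`, then a factor of length `n` is determined by its cutting position and two words
of `S`, so there are at most `(n + 1) C²` of them.

Conversely, assume linear complexity. If `x` is ultimately periodic, then `S = Fac x` works.
Otherwise, some `m ∈ [n, 2n]` satisfies `p_x(m + 1) - p_x(m) ≤ 2C`, so `x` has boundedly many right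
special factors of length `m`, and aperiodicity forces one of them into every window of length
`O(n)`; their prefixes of length `n` form a marker set with boundedly many words per length. A
factor whose length is a suitable multiple of `q` contains a marker `v` of length `2q`, and it is
cut in the middle of `v`. Each half is at least `q` long and begins or ends with half of `v`. If the occurrences of `v` are at distance at least `q`, then
sliding a window of length `l + 2q` over one shows that `v` contributes only boundedly many halves
of each length `l = O(q)`. Otherwise `v` has a period `p < q`, and the factor is cut instead where
this period breaks, which again happens sparsely, unless the factor has period `p` throughout, in
which case it is determined by `v` and its length. Finally, using the scales `q = 2 ^ k`, a given
length meets only boundedly many scales.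
-/

section Words

variable {x : ℕ → A}

@[simp]
lemma length_wordSeg (x : ℕ → A) (i n : ℕ) : (wordSeg x i n).length = n := by
  simp [wordSeg]

@[simp]
lemma getElem_wordSeg (i n t : ℕ) (ht : t < (wordSeg x i n).length) :
    (wordSeg x i n)[t] = x (i + t) := by
  simp [wordSeg]

lemma wordSeg_eq_wordSeg_iff {i j n : ℕ} :
    wordSeg x i n = wordSeg x j n ↔ ∀ t < n, x (i + t) = x (j + t) := by
  simp [wordSeg, List.map_inj_left]

lemma wordSeg_add (x : ℕ → A) (i m n : ℕ) :
    wordSeg x i (m + n) = wordSeg x i m ++ wordSeg x (i + m) n := by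
  simp [wordSeg, List.range_add, add_assoc]

lemma wordSeg_succ (x : ℕ → A) (i n : ℕ) :
    wordSeg x i (n + 1) = wordSeg x i n ++ [x (i + n)] := by
  simp [wordSeg, List.range_succ]

lemma take_wordSeg {i m n : ℕ} (h : m ≤ n) : (wordSeg x i n).take m = wordSeg x i m := by
  obtain ⟨k, rfl⟩ := Nat.exists_eq_add_of_le h
  rw [wordSeg_add, List.take_left' (length_wordSeg x i m)]

lemma drop_wordSeg (x : ℕ → A) (i m n : ℕ) :
    (wordSeg x i n).drop m = wordSeg x (i + m) (n - m) :=
  List.ext_getElem (by simp) fun t _ _ => by simp [add_assoc]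

lemma dropLast_wordSeg (x : ℕ → A) (i n : ℕ) : (wordSeg x i n).dropLast = wordSeg x i (n - 1) := by
  rw [List.dropLast_eq_take, length_wordSeg, take_wordSeg (Nat.sub_le n 1)]

lemma tail_wordSeg (x : ℕ → A) (i n : ℕ) : (wordSeg x i n).tail = wordSeg x (i + 1) (n - 1) := by
  rw [← List.drop_one, drop_wordSeg]

lemma eq_wordSeg_of_isPrefix {v : List A} {i n : ℕ} (h : v <+: wordSeg x i n) :
    v = wordSeg x i v.length := by
  rw [← take_wordSeg (h.length_le.trans_eq (length_wordSeg x i n))]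
  exact List.prefix_iff_eq_take.1 h

lemma wordSeg_isInfix {i j m n : ℕ} (hij : i ≤ j) (hmn : j + m ≤ i + n) :
    wordSeg x j m <:+: wordSeg x i n := by
  obtain ⟨d, rfl⟩ := Nat.exists_eq_add_of_le hij
  rw [← take_wordSeg (show m ≤ n - d by omega), ← drop_wordSeg]
  exact (List.take_prefix _ _).isInfix.trans (List.drop_suffix _ _).isInfix

lemma exists_eq_wordSeg_of_isInfix {v : List A} {i n : ℕ} (h : v <:+: wordSeg x i n) :
    ∃ d, d + v.length ≤ n ∧ v = wordSeg x (i + d) v.length := by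
  obtain ⟨s, t, hst⟩ := h
  have hlen := congrArg List.length hst
  simp only [List.length_append, length_wordSeg] at hlen
  refine ⟨s.length, by omega, eq_wordSeg_of_isPrefix (n := n - s.length) ?_⟩
  rw [← drop_wordSeg, ← hst, List.append_assoc, List.drop_left]
  exact List.prefix_append v t

lemma wordSeg_mem_Fac (x : ℕ → A) (i n : ℕ) : wordSeg x i n ∈ Fac x :=
  ⟨i, n, rfl⟩

lemma isFactorial_Fac (x : ℕ → A) : IsFactorial (Fac x) := by
  rintro _ ⟨i, n, rfl⟩ v hv
  obtain ⟨d, -, h⟩ := exists_eq_wordSeg_of_isInfix hv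
  exact ⟨i + d, v.length, h⟩

lemma exists_append_singleton_mem_Fac {u : List A} (hu : u ∈ Fac x) :
    ∃ a, u ++ [a] ∈ Fac x := by
  obtain ⟨i, n, rfl⟩ := hu
  exact ⟨x (i + n), i, n + 1, (wordSeg_succ x i n).symm⟩

end Words

section Complexity

open Finset.HasAntidiagonal (antidiagonal)

lemma finite_words_of_length [Finite A] (L : Set (List A)) (n : ℕ) :
    {u ∈ L | u.length = n}.Finite :=
  (List.finite_length_eq A n).subset fun _ h => h.2

lemma complexity_eq_zero {L : Set (List A)} {n : ℕ} (h : ∀ u ∈ L, u.length ≠ n) :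
    complexity L n = 0 := by
  rw [complexity, Set.sep_eq_empty_iff_mem_false.2 h, Set.ncard_empty]

lemma complexity_le_of_subset_image [Finite A] {L L' : Set (List A)} {m n : ℕ}
    (f : List A → List A) (h : {u ∈ L | u.length = m} ⊆ f '' {v ∈ L' | v.length = n}) :
    complexity L m ≤ complexity L' n :=
  (Set.ncard_le_ncard h ((finite_words_of_length L' n).image f)).trans
    (Set.ncard_image_le (finite_words_of_length L' n))

lemma complexity_mono [Finite A] {L L' : Set (List A)} (h : L ⊆ L') (n : ℕ) :
    complexity L n ≤ complexity L' n :=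
  Set.ncard_le_ncard (fun _ hu => ⟨h hu.1, hu.2⟩) (finite_words_of_length L' n)

lemma complexity_union_le (L L' : Set (List A)) (n : ℕ) :
    complexity (L ∪ L') n ≤ complexity L n + complexity L' n := by
  have hsep : {u ∈ L ∪ L' | u.length = n} = {u ∈ L | u.length = n} ∪ {u ∈ L' | u.length = n} := by
    ext u
    exact or_and_right
  unfold complexity
  rw [hsep]
  exact Set.ncard_union_le _ _

lemma complexity_iUnion_le {ι : Type*} [Finite ι] (L : ι → Set (List A)) {n K : ℕ}
    (h : ∀ i, complexity (L i) n ≤ K) : complexity (⋃ i, L i) n ≤ Nat.card ι * K := by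
  have := Fintype.ofFinite ι
  have hsep : {u ∈ ⋃ i, L i | u.length = n} = ⋃ i, {u ∈ L i | u.length = n} := by
    ext u
    simp
  calc complexity (⋃ i, L i) n
      ≤ ∑ i, complexity (L i) n := by
        unfold complexity
        rw [hsep]
        exact Set.ncard_iUnion_le_of_fintype _
    _ ≤ ∑ _i : ι, K := Finset.sum_le_sum fun i _ => h i
    _ = Nat.card ι * K := by simp

lemma complexity_prodL_le [Finite A] (S T : Set (List A)) (n : ℕ) :
    complexity (prodL S T) n ≤
      ∑ ij ∈ antidiagonal n, complexity S ij.1 * complexity T ij.2 := by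
  have hfin (ij : ℕ × ℕ) : ({u ∈ S | u.length = ij.1} ×ˢ {v ∈ T | v.length = ij.2}).Finite :=
    (finite_words_of_length S ij.1).prod (finite_words_of_length T ij.2)
  have hsub : {w ∈ prodL S T | w.length = n} ⊆ ⋃ ij ∈ antidiagonal n,
      (fun uv : List A × List A => uv.1 ++ uv.2) ''
        ({u ∈ S | u.length = ij.1} ×ˢ {v ∈ T | v.length = ij.2}) := by
    rintro _ ⟨⟨u, hu, v, hv, rfl⟩, hn⟩
    rw [List.length_append] at hn
    exact Set.mem_biUnion (x := (u.length, v.length)) (by simpa using hn)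
      ⟨(u, v), ⟨⟨hu, rfl⟩, ⟨hv, rfl⟩⟩, rfl⟩
  refine (Set.ncard_le_ncard hsub ?_).trans ((Finset.set_ncard_biUnion_le _ _).trans ?_)
  · exact (antidiagonal n).finite_toSet.biUnion fun ij _ => (hfin ij).image _
  · refine Finset.sum_le_sum fun ij _ => (Set.ncard_image_le (hfin ij)).trans ?_
    exact Set.ncard_prod.le

lemma mem_powL_two {S : Set (List A)} {w : List A} :
    w ∈ powL S 2 ↔ ∃ s ∈ S, ∃ t ∈ S, w = s ++ t := by
  simp [powL, prodL]

lemma powL_two_mono {S T : Set (List A)} (h : S ⊆ T) : powL S 2 ⊆ powL T 2 := by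
  intro w hw
  obtain ⟨s, hs, t, ht, rfl⟩ := mem_powL_two.1 hw
  exact mem_powL_two.2 ⟨s, h hs, t, h ht, rfl⟩

lemma complexity_le_of_subset_powL_two [Finite A] {L S : Set (List A)} {C : ℕ}
    (hS : ∀ n, complexity S n ≤ C) (hL : L ⊆ powL S 2) (n : ℕ) :
    complexity L n ≤ (n + 1) * (C * C) := by
  have hpow : powL S 2 = prodL S S := by simp [powL, prodL]
  calc complexity L n
      ≤ complexity (prodL S S) n := complexity_mono (hpow ▸ hL) n
    _ ≤ ∑ ij ∈ antidiagonal n, complexity S ij.1 * complexity S ij.2 :=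
        complexity_prodL_le S S n
    _ ≤ ∑ _ij ∈ antidiagonal n, C * C :=
        Finset.sum_le_sum fun ij _ => Nat.mul_le_mul (hS ij.1) (hS ij.2)
    _ = (n + 1) * (C * C) := by simp

end Complexity

section RightSpecial

lemma complexity_add_complexity_rightSpecial_le [Finite A] {F : Set (List A)}
    (hfac : IsFactorial F) (hext : ∀ u ∈ F, ∃ a, u ++ [a] ∈ F) (m : ℕ) :
    complexity F m + complexity {u | RightSpecial F u} m ≤ complexity F (m + 1) := by
  classical
  let words (L : Set (List A)) (n : ℕ) := (finite_words_of_length L n).toFinset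
  have hcard (L : Set (List A)) (n : ℕ) : complexity L n = (words L n).card :=
    Set.ncard_eq_toFinset_card _ _
  have hmem {L : Set (List A)} {n : ℕ} {u : List A} : u ∈ words L n ↔ u ∈ L ∧ u.length = n := by
    simp [words]
  have hdrop : ∀ w ∈ words F (m + 1), w.dropLast ∈ words F m := fun w hw => by
    obtain ⟨hwF, hwm⟩ := hmem.1 hw
    exact hmem.2 ⟨hfac w hwF _ (List.dropLast_prefix w).isInfix, by simp [hwm]⟩
  have hspecial : (words {u | RightSpecial F u} m).card =
      ∑ u ∈ words F m, if RightSpecial F u then 1 else 0 := by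
    rw [← Finset.card_filter]
    congr 1
    ext u
    simp only [Finset.mem_filter, hmem, Set.mem_ofPred_eq]
    exact ⟨fun h => ⟨⟨h.1.1, h.2⟩, h.1⟩, fun h => ⟨h.2, h.1.2⟩⟩
  rw [hcard, hcard, hcard, hspecial, Finset.card_eq_sum_card_fiberwise hdrop,
    Finset.card_eq_sum_ones, ← Finset.sum_add_distrib]
  refine Finset.sum_le_sum fun u hu => ?_
  obtain ⟨huF, hum⟩ := hmem.1 hu
  have hfiber {a : A} (ha : u ++ [a] ∈ F) :
      u ++ [a] ∈ {w ∈ words F (m + 1) | w.dropLast = u} :=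
    Finset.mem_filter.2 ⟨hmem.2 ⟨ha, by simp [hum]⟩, List.dropLast_concat⟩
  split_ifs with hs
  · obtain ⟨-, a, b, hab, ha, hb⟩ := hs
    exact Finset.one_lt_card.2 ⟨_, hfiber ha, _, hfiber hb, by simpa using hab⟩
  · obtain ⟨a, ha⟩ := hext u huF
    exact Finset.card_pos.2 ⟨_, hfiber ha⟩

variable {x : ℕ → A}

lemma apply_eq_of_not_rightSpecial {i j m : ℕ} (hi : ¬ RightSpecial (Fac x) (wordSeg x i m))
    (hij : wordSeg x i m = wordSeg x j m) : x (i + m) = x (j + m) := by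
  by_contra hne
  refine hi ⟨wordSeg_mem_Fac x i m, x (i + m), x (j + m), hne, ?_, ?_⟩
  · exact wordSeg_succ x i m ▸ wordSeg_mem_Fac x i (m + 1)
  · exact hij ▸ wordSeg_succ x j m ▸ wordSeg_mem_Fac x j (m + 1)

lemma wordSeg_succ_start_eq {i j m : ℕ} (hij : wordSeg x i m = wordSeg x j m)
    (hm : x (i + m) = x (j + m)) : wordSeg x (i + 1) m = wordSeg x (j + 1) m := by
  have hsucc : wordSeg x i (m + 1) = wordSeg x j (m + 1) := by
    rw [wordSeg_succ, wordSeg_succ, hij, hm]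
  simpa [drop_wordSeg] using congrArg (List.drop 1) hsucc

lemma ultimatelyPeriodic_of_forall_not_rightSpecial {a b m : ℕ} (hab : a < b)
    (heq : wordSeg x a m = wordSeg x b m)
    (hns : ∀ i, a ≤ i → i < b → ¬ RightSpecial (Fac x) (wordSeg x i m)) :
    UltimatelyPeriodic x := by
  have hshift : ∀ t, ¬ RightSpecial (Fac x) (wordSeg x (a + t) m) ∧
      wordSeg x (a + t) m = wordSeg x (b + t) m := by
    intro t
    induction t using Nat.strong_induction_on with
    | _ t ih =>
      constructor
      · rcases lt_or_ge (a + t) b with hlt | hge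
        · exact hns (a + t) (by omega) hlt
        · obtain ⟨hns', heq'⟩ := ih (a + t - b) (by omega)
          rwa [heq', Nat.add_sub_cancel' hge] at hns'
      · cases t with
        | zero => exact heq
        | succ t =>
          obtain ⟨hns', heq'⟩ := ih t (by omega)
          exact wordSeg_succ_start_eq heq' (apply_eq_of_not_rightSpecial hns' heq')
  refine ⟨a + m, b - a, by omega, fun n hn => ?_⟩
  have hn' := apply_eq_of_not_rightSpecial (hshift (n - (a + m))).1 (hshift (n - (a + m))).2
  rw [show n + (b - a) = b + (n - (a + m)) + m by omega, ← hn']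
  congr 1
  omega

lemma exists_rightSpecial_of_not_ultimatelyPeriodic [Finite A] (hx : ¬ UltimatelyPeriodic x)
    (i m : ℕ) : ∃ d ≤ complexity (Fac x) m, RightSpecial (Fac x) (wordSeg x (i + d) m) := by
  by_contra! hns
  obtain ⟨c, hc, d, hd, hne, heq⟩ := Set.exists_ne_map_eq_of_ncard_lt_of_maps_to
    (s := Set.Iic (complexity (Fac x) m)) (t := {u ∈ Fac x | u.length = m})
    (f := fun d => wordSeg x (i + d) m) (by
      rw [Set.ncard_eq_toFinset_card' (Set.Iic _), Set.toFinset_Iic, Nat.card_Iic]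
      exact Nat.lt_succ_self _)
    (fun d _ => ⟨wordSeg_mem_Fac x _ m, length_wordSeg x _ m⟩) (finite_words_of_length _ _)
  wlog hcd : c < d generalizing c d
  · exact this d hd c hc hne.symm heq.symm (by omega)
  refine hx (ultimatelyPeriodic_of_forall_not_rightSpecial (by omega) heq fun j hj hjd => ?_)
  obtain ⟨e, rfl⟩ := Nat.exists_eq_add_of_le (show i ≤ j by omega)
  exact hns e (by rw [Set.mem_Iic] at hd; omega)

end RightSpecial

section Markers

variable {x : ℕ → A}

lemma exists_succ_le_add_of_le_mul {f : ℕ → ℕ} {C : ℕ} (hf : ∀ n, 1 ≤ n → f n ≤ C * n) (n : ℕ) :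
    ∃ m, n ≤ m ∧ m ≤ 2 * n ∧ f (m + 1) ≤ f m + 2 * C := by
  by_contra! hjump
  have hgrow : ∀ j ≤ n + 1, (2 * C + 1) * j ≤ f (n + j) := by
    intro j
    induction j with
    | zero => simp
    | succ j ih =>
      intro hj
      have hstep := hjump (n + j) (by omega) (by omega)
      have hj' := ih (by omega)
      rw [← add_assoc, mul_add_one]
      omega
  have hupper := hf (n + (n + 1)) (by omega)
  have hlower := hgrow (n + 1) le_rfl
  nlinarith

theorem exists_markerSet [Finite A] {C : ℕ} (hC : ∀ n, 1 ≤ n → complexity (Fac x) n ≤ C * n)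
    (hx : ¬ UltimatelyPeriodic x) :
    ∃ M : Set (List A), MarkerSet (2 * C + 1) M (Fac x) ∧ ∀ n, complexity M n ≤ 2 * C := by
  choose m hnm hmn hstep using exists_succ_le_add_of_le_mul hC
  let special (n : ℕ) : Set (List A) := {u | RightSpecial (Fac x) u ∧ u.length = m n}
  refine ⟨{v | ∃ u ∈ special v.length, v <+: u}, ?_, fun n => ?_⟩
  · rintro n hn _ ⟨i, l, rfl⟩ hl
    rw [length_wordSeg] at hl
    obtain ⟨d, hd, hspecial⟩ := exists_rightSpecial_of_not_ultimatelyPeriodic hx i (m n)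
    have hd' : d ≤ 2 * C * n := by
      have := hd.trans (hC (m n) (hn.trans (hnm n)))
      nlinarith [hmn n]
    refine ⟨wordSeg x (i + d) n, ⟨_, ⟨hspecial, ?_⟩, ?_⟩, length_wordSeg x _ n,
      wordSeg_isInfix (by omega) (by nlinarith)⟩
    · simp
    · rw [← take_wordSeg (hnm n)]
      exact List.take_prefix _ _
  · have hspecial : complexity {u | RightSpecial (Fac x) u} (m n) ≤ 2 * C := by
      have := complexity_add_complexity_rightSpecial_le (isFactorial_Fac x)
        (fun _ => exists_append_singleton_mem_Fac) (m n)
      have := hstep n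
      omega
    refine (complexity_le_of_subset_image (n := m n) (List.take n) ?_).trans hspecial
    rintro v ⟨⟨u, ⟨hu, hum⟩, hvu⟩, rfl⟩
    exact ⟨u, ⟨hu, hum⟩, (List.prefix_iff_eq_take.1 hvu).symm⟩

end Markers

section UltimatelyPeriodic

variable {x : ℕ → A}

lemma exists_lt_forall_apply_add_eq {N p : ℕ} (hp : 0 < p) (hx : ∀ n, N ≤ n → x (n + p) = x n)
    (i : ℕ) : ∃ j < N + p, ∀ t, x (i + t) = x (j + t) := by
  induction i using Nat.strong_induction_on with
  | _ i ih =>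
    rcases lt_or_ge i (N + p) with hi | hi
    · exact ⟨i, hi, fun _ => rfl⟩
    · obtain ⟨j, hj, hjt⟩ := ih (i - p) (by omega)
      refine ⟨j, hj, fun t => ?_⟩
      rw [← hjt, ← hx (i - p + t) (by omega)]
      congr 1
      omega

lemma exists_complexity_Fac_le_of_ultimatelyPeriodic (hx : UltimatelyPeriodic x) :
    ∃ C, ∀ n, complexity (Fac x) n ≤ C := by
  obtain ⟨N, p, hp, hx⟩ := hx
  refine ⟨N + p, fun n => ?_⟩
  have hsub : {u ∈ Fac x | u.length = n} ⊆ (fun i => wordSeg x i n) '' Set.Iio (N + p) := by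
    rintro _ ⟨⟨i, l, rfl⟩, rfl⟩
    obtain ⟨j, hj, hjt⟩ := exists_lt_forall_apply_add_eq hp hx i
    rw [length_wordSeg]
    exact ⟨j, hj, wordSeg_eq_wordSeg_iff.2 fun t _ => (hjt t).symm⟩
  calc complexity (Fac x) n
      ≤ ((fun i => wordSeg x i n) '' Set.Iio (N + p)).ncard :=
        Set.ncard_le_ncard hsub ((Set.finite_Iio _).image _)
    _ ≤ (Set.Iio (N + p)).ncard := Set.ncard_image_le
    _ = N + p := by simp [Set.ncard_eq_toFinset_card']

end UltimatelyPeriodic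

section Sparse

/-- The positions of `x` at which some word of `M` starts. -/
def occurrences (x : ℕ → A) (M : Set (List A)) : Set ℕ := {i | ∃ n, wordSeg x i n ∈ M}

/-- The words of `M` occur `q`-sparsely in `x` if distinct occurrences start at distance at
least `q`. Only sparse markers cost a bounded number of factors per length. -/
def OccursSparsely (x : ℕ → A) (M : Set (List A)) (q : ℕ) : Prop :=
  ∀ i ∈ occurrences x M, ∀ j ∈ occurrences x M, i < j → i + q ≤ j

variable {x : ℕ → A} {M : Set (List A)} {q : ℕ}

lemma add_mem_occurrences_of_isPrefix_drop {v : List A} {i n o : ℕ} (hv : v ∈ M)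
    (h : v <+: (wordSeg x i n).drop o) : i + o ∈ occurrences x M := by
  rw [drop_wordSeg] at h
  exact ⟨v.length, eq_wordSeg_of_isPrefix h ▸ hv⟩

lemma OccursSparsely.eq_of_mem_occurrences (hM : OccursSparsely x M q) {b i j : ℕ} (hi : i < q)
    (hj : j < q) (hbi : b + i ∈ occurrences x M) (hbj : b + j ∈ occurrences x M) : i = j := by
  rcases lt_trichotomy i j with hij | hij | hij
  · have := hM _ hbi _ hbj (by omega)
    omega
  · exact hij
  · have := hM _ hbj _ hbi (by omega)
    omega

/-- Shifting the start of such a word by `j < q` letters to the left produces `q` factors of length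
`L + q`, and sparseness recovers `j` from the extended word. -/
lemma OccursSparsely.mul_ncard_le [Finite A] (hM : OccursSparsely x M q) (o L : ℕ) :
    q * {w | ∃ a, q ≤ a ∧ w = wordSeg x a L ∧ ∃ v ∈ M, v <+: w.drop o}.ncard ≤
      complexity (Fac x) (L + q) := by
  set Y := {w | ∃ a, q ≤ a ∧ w = wordSeg x a L ∧ ∃ v ∈ M, v <+: w.drop o}
  choose! a hqa hwa hmark using fun w (hw : w ∈ Y) => hw
  let extend (z : List A × ℕ) : List A := wordSeg x (a z.1 - z.2) (L + q)
  have hsuffix {w : List A} {j : ℕ} (hw : w ∈ Y) (hj : j < q) :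
      ((extend (w, j)).drop j).take L = w := by
    have := hqa w hw
    rw [drop_wordSeg, take_wordSeg (by omega), show a w - j + j = a w by omega, ← hwa w hw]
  have hocc {w : List A} {j : ℕ} (hw : w ∈ Y) (hj : j < q) {i : ℕ}
      (hi : extend (w, j) = wordSeg x i (L + q)) : i + o + j ∈ occurrences x M := by
    obtain ⟨v, hv, hvw⟩ := hmark w hw
    rw [add_right_comm, add_assoc]
    refine add_mem_occurrences_of_isPrefix_drop hv (n := L + q) (hvw.trans ?_)
    have hprefix := List.take_prefix L ((extend (w, j)).drop j)
    rw [hsuffix hw hj] at hprefix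
    rw [← hi, ← List.drop_drop]
    exact hprefix.drop o
  have hinj : Set.InjOn extend (Y ×ˢ Set.Iio q) := by
    rintro ⟨w, j⟩ ⟨hw, hj⟩ ⟨w', j'⟩ ⟨hw', hj'⟩ heq
    obtain rfl : j = j' := hM.eq_of_mem_occurrences hj hj' (hocc hw hj rfl) (hocc hw' hj' heq.symm)
    exact Prod.ext (by rw [← hsuffix hw hj, heq, hsuffix hw' hj']) rfl
  calc q * Y.ncard = (Y ×ˢ Set.Iio q).ncard := by
        rw [Set.ncard_prod, mul_comm]
        simp [Set.ncard_eq_toFinset_card']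
    _ ≤ complexity (Fac x) (L + q) := Set.ncard_le_ncard_of_injOn extend
        (fun z _ => ⟨wordSeg_mem_Fac x _ _, length_wordSeg x _ _⟩) hinj
        (finite_words_of_length _ _)

lemma OccursSparsely.subsingleton_start_lt (hM : OccursSparsely x M q) (o L : ℕ) :
    {w | ∃ a < q, w = wordSeg x a L ∧ ∃ v ∈ M, v <+: w.drop o}.Subsingleton := by
  rintro _ ⟨a, ha, rfl, v, hv, hva⟩ _ ⟨b, hb, rfl, w, hw, hwb⟩
  have hao := add_mem_occurrences_of_isPrefix_drop hv hva
  have hbo := add_mem_occurrences_of_isPrefix_drop hw hwb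
  rw [add_comm] at hao hbo
  rw [hM.eq_of_mem_occurrences ha hb hao hbo]

/-- The summand `q` accounts for the words which only occur before position `q`. -/
theorem OccursSparsely.mul_complexity_le [Finite A] (hM : OccursSparsely x M q) (o L : ℕ) :
    q * complexity {w ∈ Fac x | ∃ v ∈ M, v <+: w.drop o} L ≤ complexity (Fac x) (L + q) + q := by
  set late := {w | ∃ a, q ≤ a ∧ w = wordSeg x a L ∧ ∃ v ∈ M, v <+: w.drop o}
  set early := {w | ∃ a < q, w = wordSeg x a L ∧ ∃ v ∈ M, v <+: w.drop o}
  have hearly_card : early.ncard ≤ 1 :=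
    (Set.ncard_le_one (hM.subsingleton_start_lt o L).finite).2 (hM.subsingleton_start_lt o L)
  have hlate_fin : late.Finite := (List.finite_length_eq A L).subset <| by
    rintro _ ⟨a, -, rfl, -⟩
    exact length_wordSeg x a L
  have hsplit : {w ∈ {w ∈ Fac x | ∃ v ∈ M, v <+: w.drop o} | w.length = L} ⊆ late ∪ early := by
    rintro _ ⟨⟨⟨a, n, rfl⟩, hmark⟩, hn⟩
    obtain rfl : n = L := (length_wordSeg x a n).symm.trans hn
    rcases le_or_gt q a with ha | ha
    · exact Or.inl ⟨a, ha, rfl, hmark⟩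
    · exact Or.inr ⟨a, ha, rfl, hmark⟩
  have hcard : complexity {w ∈ Fac x | ∃ v ∈ M, v <+: w.drop o} L ≤ late.ncard + early.ncard :=
    (Set.ncard_le_ncard hsplit
      (hlate_fin.union (hM.subsingleton_start_lt o L).finite)).trans (Set.ncard_union_le _ _)
  calc q * complexity {w ∈ Fac x | ∃ v ∈ M, v <+: w.drop o} L
      ≤ q * (late.ncard + 1) := Nat.mul_le_mul_left q (by omega)
    _ = q * late.ncard + q := by ring
    _ ≤ complexity (Fac x) (L + q) + q := Nat.add_le_add_right (hM.mul_ncard_le o L) q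

end Sparse

section Cut

/-- The two halves obtained by cutting the words of `F` after the first `c` letters of an
occurrence of a word of `M`. The left halves come from words ending with that
occurrence, the right halves from words beginning with it. -/
def cutHalves (F M : Set (List A)) (c : ℕ) : Set (List A) :=
  {s | ∃ u, ∃ v ∈ M, u ++ v ∈ F ∧ s = u ++ v.take c} ∪
    {t | ∃ v ∈ M, ∃ w, v ++ w ∈ F ∧ t = v.drop c ++ w}

variable {F M : Set (List A)} {c : ℕ}

lemma mem_powL_two_cutHalves (hF : IsFactorial F) {v f : List A} (hv : v ∈ M) (hf : f ∈ F)
    (hvf : v <:+: f) : f ∈ powL (cutHalves F M c) 2 := by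
  obtain ⟨u, w, rfl⟩ := hvf
  refine mem_powL_two.2 ⟨u ++ v.take c, Or.inl ⟨u, v, hv, ?_, rfl⟩,
    v.drop c ++ w, Or.inr ⟨v, hv, w, ?_, rfl⟩, ?_⟩
  · exact hF _ hf _ (List.prefix_append _ _).isInfix
  · exact hF _ hf _ ⟨u, [], by simp⟩
  · rw [List.append_assoc, List.append_assoc, ← List.append_assoc (v.take c),
      List.take_append_drop]

lemma le_length_of_mem_cutHalves (hM : ∀ v ∈ M, v.length = 2 * c) :
    ∀ z ∈ cutHalves F M c, c ≤ z.length := by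
  rintro _ (⟨u, v, hv, -, rfl⟩ | ⟨v, hv, w, -, rfl⟩) <;>
  · have := hM v hv
    simp only [List.length_append, List.length_take, List.length_drop]
    omega

lemma complexity_cutHalves_le [Finite A] (hM : ∀ v ∈ M, v.length = 2 * c) (l : ℕ) :
    complexity (cutHalves F M c) l ≤
      complexity {f ∈ F | ∃ v ∈ M, v <:+ f} (l + c) +
      complexity {f ∈ F | ∃ v ∈ M, v <+: f} (l + c) := by
  refine (complexity_union_le _ _ l).trans (Nat.add_le_add ?_ ?_)
  · refine complexity_le_of_subset_image (List.take l) ?_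
    rintro _ ⟨⟨u, v, hv, huv, rfl⟩, rfl⟩
    have := hM v hv
    refine ⟨u ++ v, ⟨⟨huv, v, hv, List.suffix_append u v⟩, ?_⟩, ?_⟩
    · simp only [List.length_append, List.length_take]
      omega
    · exact (List.prefix_iff_eq_take.1
        ((List.prefix_append_right_inj u).2 (List.take_prefix c v))).symm
  · refine complexity_le_of_subset_image (List.drop c) ?_
    rintro _ ⟨⟨v, hv, w, hvw, rfl⟩, rfl⟩
    have := hM v hv
    refine ⟨v ++ w, ⟨⟨hvw, v, hv, List.prefix_append v w⟩, ?_⟩, ?_⟩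
    · simp only [List.length_append, List.length_drop]
      omega
    · rw [List.drop_append_of_le_length (by omega)]

theorem complexity_cutHalves_le_of_occursSparsely [Finite A] {x : ℕ → A} {q C E l : ℕ}
    (hq : 0 < q) (hC : ∀ n, 1 ≤ n → complexity (Fac x) n ≤ C * n)
    (hM : ∀ v ∈ M, v.length = 2 * q) (hsparse : OccursSparsely x M q) (hl : l < E * q) :
    complexity (cutHalves (Fac x) M q) l ≤ 2 * (C * (E + 2) + 1) := by
  have hmarked (o : ℕ) : complexity {w ∈ Fac x | ∃ v ∈ M, v <+: w.drop o} (l + q) ≤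
      C * (E + 2) + 1 := by
    refine Nat.le_of_mul_le_mul_left ?_ hq
    calc q * complexity {w ∈ Fac x | ∃ v ∈ M, v <+: w.drop o} (l + q)
        ≤ complexity (Fac x) (l + q + q) + q := hsparse.mul_complexity_le o (l + q)
      _ ≤ C * (l + q + q) + q := Nat.add_le_add_right (hC _ (by omega)) q
      _ ≤ C * ((E + 2) * q) + q := by gcongr; linarith
      _ = q * (C * (E + 2) + 1) := by ring
  have hsuffix : complexity {f ∈ Fac x | ∃ v ∈ M, v <:+ f} (l + q) ≤ C * (E + 2) + 1 := by
    refine (complexity_le_of_subset_image id ?_).trans (hmarked (l + q - 2 * q))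
    rintro f ⟨⟨hf, v, hv, hvf⟩, hfl⟩
    refine ⟨f, ⟨⟨hf, v, hv, ?_⟩, hfl⟩, rfl⟩
    rw [← hfl, ← hM v hv, ← List.suffix_iff_eq_drop.1 hvf]
  have hprefix := hmarked 0
  simp only [List.drop_zero] at hprefix
  have := complexity_cutHalves_le (F := Fac x) hM l
  omega

end Cut

section Periods

variable {x : ℕ → A} {p : ℕ}

lemma hasPeriod_wordSeg_iff {i n : ℕ} :
    (wordSeg x i n).HasPeriod p ↔ ∀ t, i ≤ t → t + p < i + n → x t = x (t + p) := by
  rw [List.hasPeriod_iff_getElem?, length_wordSeg]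
  constructor
  · intro h t hit ht
    have := h (t - i) (by omega)
    rw [List.getElem?_eq_getElem (by simp; omega), List.getElem?_eq_getElem (by simp; omega),
      Option.some_inj, getElem_wordSeg, getElem_wordSeg, ← add_assoc,
      Nat.add_sub_cancel' hit] at this
    exact this
  · intro h t ht
    rw [List.getElem?_eq_getElem (by simp; omega), List.getElem?_eq_getElem (by simp; omega),
      getElem_wordSeg, getElem_wordSeg, ← add_assoc]
    exact congrArg some (h (i + t) (by omega) (by omega))

lemma hasPeriod_wordSeg_of_overlap {i j k l m n : ℕ} (hi : (wordSeg x i n).HasPeriod p)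
    (hj : (wordSeg x j m).HasPeriod p) (hij : j + p ≤ i + n) (hik : i ≤ k)
    (hkl : k + l ≤ j + m) : (wordSeg x k l).HasPeriod p := by
  rw [hasPeriod_wordSeg_iff] at *
  intro t hkt htl
  rcases lt_or_ge t j with ht | ht
  · exact hi t (by omega) (by omega)
  · exact hj t ht (by omega)

/-- The words of length `N` in which the period `p` breaks exactly at the last letter. -/
def rightBreaks (p N : ℕ) : Set (List A) :=
  {v | v.length = N ∧ v.dropLast.HasPeriod p ∧ ¬ v.HasPeriod p}

/-- The words of length `N` in which the period `p` breaks exactly at the first letter. -/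
def leftBreaks (p N : ℕ) : Set (List A) :=
  {v | v.length = N ∧ v.tail.HasPeriod p ∧ ¬ v.HasPeriod p}

lemma occursSparsely_rightBreaks {q : ℕ} (hpq : p < q) :
    OccursSparsely x (rightBreaks p (2 * q)) q := by
  rintro i ⟨n, hn, hi, hbreak⟩ j ⟨m, hm, hj, -⟩ hij
  rw [length_wordSeg] at hn hm
  rw [dropLast_wordSeg] at hi hj
  by_contra! hji
  exact hbreak (hasPeriod_wordSeg_of_overlap hi hj (by omega) le_rfl (by omega))

lemma occursSparsely_leftBreaks {q : ℕ} (hpq : p < q) :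
    OccursSparsely x (leftBreaks p (2 * q)) q := by
  rintro i ⟨n, hn, hi, -⟩ j ⟨m, hm, hj, hbreak⟩ hij
  rw [length_wordSeg] at hn hm
  rw [tail_wordSeg] at hi hj
  by_contra! hji
  exact hbreak (hasPeriod_wordSeg_of_overlap hi hj (by omega) (by omega) (by omega))

lemma occursSparsely_singleton {v : List A} {q : ℕ} (hv : ∀ p, 0 < p → p < q → ¬ v.HasPeriod p) :
    OccursSparsely x {v} q := by
  rintro i ⟨n, rfl⟩ j ⟨m, hm⟩ hij
  obtain rfl : m = n := by simpa using congrArg List.length hm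
  by_contra! hji
  refine hv (j - i) (by omega) (by omega) (hasPeriod_wordSeg_iff.2 fun t hit ht => ?_)
  have := wordSeg_eq_wordSeg_iff.1 hm (t - i) (by omega)
  rw [Nat.add_sub_cancel' hit] at this
  rw [← this]
  congr 1
  omega

lemma hasPeriod_wordSeg_or_rightBreak {i n N : ℕ} (hpN : p < N) (hNn : N ≤ n)
    (h : (wordSeg x i N).HasPeriod p) :
    (wordSeg x i n).HasPeriod p ∨ ∃ b ∈ rightBreaks p N, b <:+: wordSeg x i n := by
  induction n, hNn using Nat.le_induction with
  | base => exact Or.inl h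
  | succ n hNn ih =>
    rcases ih with hn | ⟨b, hb, hbn⟩
    · by_cases hlast : (wordSeg x (i + (n + 1 - N)) N).HasPeriod p
      · exact Or.inl (hasPeriod_wordSeg_of_overlap hn hlast (by omega) le_rfl (by omega))
      · refine Or.inr ⟨_, ⟨length_wordSeg x _ N, ?_, hlast⟩,
          wordSeg_isInfix (by omega) (by omega)⟩
        rw [dropLast_wordSeg]
        exact hn.infix (wordSeg_isInfix (by omega) (by omega))
    · exact Or.inr ⟨b, hb, hbn.trans (wordSeg_isInfix le_rfl (by omega))⟩

lemma hasPeriod_wordSeg_or_leftBreak {i d n N : ℕ} (hpN : p < N) (hNn : N ≤ n)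
    (h : (wordSeg x (i + d) n).HasPeriod p) :
    (wordSeg x i (d + n)).HasPeriod p ∨ ∃ b ∈ leftBreaks p N, b <:+: wordSeg x i (d + n) := by
  induction d generalizing i with
  | zero => exact Or.inl (by simpa using h)
  | succ d ih =>
    rcases ih (i := i + 1) (by rwa [add_right_comm]) with hd | ⟨b, hb, hbd⟩
    · by_cases hfirst : (wordSeg x i N).HasPeriod p
      · exact Or.inl (hasPeriod_wordSeg_of_overlap hfirst hd (by omega) le_rfl (by omega))
      · refine Or.inr ⟨_, ⟨length_wordSeg x i N, ?_, hfirst⟩,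
          wordSeg_isInfix (by omega) (by omega)⟩
        rw [tail_wordSeg]
        exact hd.infix (wordSeg_isInfix (by omega) (by omega))
    · exact Or.inr ⟨b, hb, hbd.trans (wordSeg_isInfix (by omega) (by omega))⟩

theorem hasPeriod_or_exists_break {f v : List A} (hf : f ∈ Fac x) (hvf : v <:+: f)
    (hpv : p < v.length) (hv : v.HasPeriod p) :
    f.HasPeriod p ∨ (∃ b ∈ rightBreaks p v.length, b <:+: f) ∨
      ∃ b ∈ leftBreaks p v.length, b <:+: f := by
  obtain ⟨i, n, rfl⟩ := hf
  obtain ⟨d, hd, hvd⟩ := exists_eq_wordSeg_of_isInfix hvf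
  rw [hvd] at hv
  obtain ⟨m, rfl⟩ := Nat.exists_eq_add_of_le (show d ≤ n by omega)
  rcases hasPeriod_wordSeg_or_rightBreak hpv (show v.length ≤ m by omega) hv with
    hright | ⟨b, hb, hbm⟩
  · rcases hasPeriod_wordSeg_or_leftBreak hpv (by omega) hright with h | h
    · exact Or.inl h
    · exact Or.inr (Or.inr h)
  · exact Or.inr (Or.inl ⟨b, hb, hbm.trans (wordSeg_isInfix (by omega) (by omega))⟩)

end Periods

section PeriodicWords

variable {p : ℕ}

lemma hasPeriod_reverse {w : List A} (hw : w.HasPeriod p) : w.reverse.HasPeriod p := by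
  rw [List.hasPeriod_iff_getElem?] at hw ⊢
  intro i hi
  rw [List.length_reverse] at hi
  rw [List.getElem?_reverse (by omega), List.getElem?_reverse (by omega),
    hw (w.length - 1 - (i + p)) (by omega)]
  congr 1
  omega

lemma eq_of_hasPeriod_of_isPrefix {v w w' : List A} (hp : 0 < p) (hpv : p ≤ v.length)
    (hw : w.HasPeriod p) (hw' : w'.HasPeriod p) (hvw : v <+: w) (hvw' : v <+: w')
    (hlen : w.length = w'.length) : w = w' := by
  have hget {u : List A} (hu : u.HasPeriod p) (hvu : v <+: u) {i : ℕ} (hi : i < u.length) :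
      u[i]? = v[i % p]? := by
    have hmod : i % p < v.length := (Nat.mod_lt i hp).trans_le hpv
    rw [List.hasPeriod_iff_forall_getElem?_mod.1 hu i hi, List.prefix_iff_eq_take.1 hvu,
      List.getElem?_take_of_lt hmod]
  refine List.ext_getElem? fun i => ?_
  rcases lt_or_ge i w.length with hi | hi
  · rw [hget hw hvw hi, hget hw' hvw' (hlen ▸ hi)]
  · rw [List.getElem?_eq_none hi, List.getElem?_eq_none (hlen ▸ hi)]

lemma eq_of_hasPeriod_of_isSuffix {v w w' : List A} (hp : 0 < p) (hpv : p ≤ v.length)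
    (hw : w.HasPeriod p) (hw' : w'.HasPeriod p) (hvw : v <:+ w) (hvw' : v <:+ w')
    (hlen : w.length = w'.length) : w = w' :=
  List.reverse_injective <| eq_of_hasPeriod_of_isPrefix hp (hpv.trans_eq List.length_reverse.symm)
    (hasPeriod_reverse hw) (hasPeriod_reverse hw') (List.reverse_prefix.2 hvw)
    (List.reverse_prefix.2 hvw') (by simpa using hlen)

lemma isFactorial_hasPeriod (p : ℕ) : IsFactorial {w : List A | w.HasPeriod p} :=
  fun _ hu _ hv => List.HasPeriod.infix hu hv

lemma complexity_cutHalves_hasPeriod_le [Finite A] {v : List A} {q : ℕ} (hp : 0 < p)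
    (hpv : p ≤ v.length) (hv : v.length = 2 * q) (l : ℕ) :
    complexity (cutHalves {w | w.HasPeriod p} {v} q) l ≤ 2 := by
  have hsuffix : complexity {f ∈ {w | w.HasPeriod p} | ∃ u ∈ ({v} : Set (List A)), u <:+ f} (l + q)
      ≤ 1 := by
    refine (Set.ncard_le_one (finite_words_of_length _ _)).2 ?_
    rintro w ⟨⟨hw, _, rfl, hvw⟩, hwl⟩ w' ⟨⟨hw', _, rfl, hvw'⟩, hwl'⟩
    exact eq_of_hasPeriod_of_isSuffix hp hpv hw hw' hvw hvw' (hwl.trans hwl'.symm)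
  have hprefix : complexity {f ∈ {w | w.HasPeriod p} | ∃ u ∈ ({v} : Set (List A)), u <+: f} (l + q)
      ≤ 1 := by
    refine (Set.ncard_le_one (finite_words_of_length _ _)).2 ?_
    rintro w ⟨⟨hw, _, rfl, hvw⟩, hwl⟩ w' ⟨⟨hw', _, rfl, hvw'⟩, hwl'⟩
    exact eq_of_hasPeriod_of_isPrefix hp hpv hw hw' hvw hvw' (hwl.trans hwl'.symm)
  exact (complexity_cutHalves_le (by simpa using hv) l).trans (Nat.add_le_add hsuffix hprefix)

end PeriodicWords

section Scales

variable [Finite A] {x : ℕ → A} {C : ℕ}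

theorem exists_cut_of_window {q : ℕ} (hq : 0 < q)
    (hC : ∀ n, 1 ≤ n → complexity (Fac x) n ≤ C * n) {v : List A} (hv : v.length = 2 * q) :
    ∃ Z : Set (List A), (∀ z ∈ Z, q ≤ z.length) ∧
      (∀ E l, l < E * q → complexity Z l ≤ 4 * (C * (E + 2) + 1) + 2) ∧
      ∀ f ∈ Fac x, v <:+: f → f ∈ powL Z 2 := by
  have hbound {M : Set (List A)} (hM : ∀ v ∈ M, v.length = 2 * q) (hsparse : OccursSparsely x M q)
      {E l : ℕ} (hl : l < E * q) : complexity (cutHalves (Fac x) M q) l ≤ 2 * (C * (E + 2) + 1) :=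
    complexity_cutHalves_le_of_occursSparsely hq hC hM hsparse hl
  by_cases hper : ∃ p, 0 < p ∧ p < q ∧ v.HasPeriod p
  · obtain ⟨p, hp, hpq, hvp⟩ := hper
    let R := cutHalves (Fac x) (rightBreaks p (2 * q)) q
    let L := cutHalves (Fac x) (leftBreaks p (2 * q)) q
    let P := cutHalves {w | w.HasPeriod p} {v} q
    refine ⟨R ∪ L ∪ P, ?_, fun E l hl => ?_, fun f hf hvf => ?_⟩
    · rintro z ((hz | hz) | hz)
      · exact le_length_of_mem_cutHalves (fun b hb => hb.1) z hz
      · exact le_length_of_mem_cutHalves (fun b hb => hb.1) z hz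
      · exact le_length_of_mem_cutHalves (by simpa using hv) z hz
    · have hR : complexity R l ≤ _ :=
        hbound (fun b hb => hb.1) (occursSparsely_rightBreaks hpq) hl
      have hL : complexity L l ≤ _ :=
        hbound (fun b hb => hb.1) (occursSparsely_leftBreaks hpq) hl
      have hP : complexity P l ≤ 2 := complexity_cutHalves_hasPeriod_le hp (by omega) hv l
      have hRL := complexity_union_le R L l
      have hRLP := complexity_union_le (R ∪ L) P l
      omega
    · rcases hasPeriod_or_exists_break hf hvf (by omega) hvp with hfp | ⟨b, hb, hbf⟩ | ⟨b, hb, hbf⟩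
      · exact powL_two_mono Set.subset_union_right
          (mem_powL_two_cutHalves (isFactorial_hasPeriod p) rfl hfp hvf)
      · exact powL_two_mono (Set.subset_union_left.trans Set.subset_union_left)
          (mem_powL_two_cutHalves (isFactorial_Fac x) (hv ▸ hb) hf hbf)
      · exact powL_two_mono (Set.subset_union_right.trans Set.subset_union_left)
          (mem_powL_two_cutHalves (isFactorial_Fac x) (hv ▸ hb) hf hbf)
  · push Not at hper
    refine ⟨cutHalves (Fac x) {v} q, le_length_of_mem_cutHalves (by simpa using hv),
      fun E l hl => ?_, fun f hf hvf => mem_powL_two_cutHalves (isFactorial_Fac x) rfl hf hvf⟩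
    have := hbound (by simpa using hv) (occursSparsely_singleton hper) hl
    omega

theorem exists_cut_of_markerSet {D K q : ℕ} {M : Set (List A)}
    (hC : ∀ n, 1 ≤ n → complexity (Fac x) n ≤ C * n) (hM : MarkerSet D M (Fac x))
    (hK : ∀ n, complexity M n ≤ K) (hq : 0 < q) :
    ∃ Z : Set (List A), (∀ z ∈ Z, q ≤ z.length ∧ z.length < 4 * D * q) ∧
      (∀ l, complexity Z l ≤ K * (4 * (C * (4 * D + 2) + 1) + 2)) ∧
      ∀ f ∈ Fac x, 2 * D * q ≤ f.length → f.length < 4 * D * q → f ∈ powL Z 2 := by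
  let windows := {v ∈ M | v.length = 2 * q}
  have : Finite windows := (finite_words_of_length M (2 * q)).to_subtype
  choose Z hlen hcompl hcut using fun v : windows => exists_cut_of_window hq hC v.2.2
  refine ⟨{z ∈ ⋃ v, Z v | z.length < 4 * D * q}, ?_, fun l => ?_, fun f hf hDf hfD => ?_⟩
  · rintro z ⟨hz, hzD⟩
    obtain ⟨v, hv⟩ := Set.mem_iUnion.1 hz
    exact ⟨hlen v z hv, hzD⟩
  · rcases lt_or_ge l (4 * D * q) with hl | hl
    · calc complexity {z ∈ ⋃ v, Z v | z.length < 4 * D * q} l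
          ≤ complexity (⋃ v, Z v) l := complexity_mono (Set.sep_subset _ _) l
        _ ≤ Nat.card windows * _ := complexity_iUnion_le Z fun v => hcompl v (4 * D) l hl
        _ ≤ K * _ := Nat.mul_le_mul_right _ (hK (2 * q))
    · exact (complexity_eq_zero fun z hz => (hz.2.trans_le hl).ne).trans_le (Nat.zero_le _)
  · obtain ⟨v, hvM, hv, hvf⟩ := hM (2 * q) (by omega) f hf (by linarith)
    obtain ⟨s, hs, t, ht, rfl⟩ := mem_powL_two.1 (hcut ⟨v, hvM, hv⟩ f hf hvf)
    rw [List.length_append] at hfD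
    exact mem_powL_two.2 ⟨s, ⟨Set.mem_iUnion.2 ⟨_, hs⟩, by omega⟩,
      t, ⟨Set.mem_iUnion.2 ⟨_, ht⟩, by omega⟩, rfl⟩

end Scales

section Dyadic

variable [Finite A] {K E : ℕ} {Z : ℕ → Set (List A)}

lemma complexity_iUnion_dyadic_le
    (hlen : ∀ k, ∀ z ∈ Z k, 2 ^ k ≤ z.length ∧ z.length < E * 2 ^ k)
    (hK : ∀ k l, complexity (Z k) l ≤ K) (l : ℕ) : complexity (⋃ k, Z k) l ≤ (E + 1) * K := by
  let scales := Finset.Icc (Nat.log 2 l - E) (Nat.log 2 l)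
  have hscales : {z ∈ ⋃ k, Z k | z.length = l} ⊆ {z ∈ ⋃ k : scales, Z k | z.length = l} := by
    rintro z ⟨hz, rfl⟩
    obtain ⟨k, hk⟩ := Set.mem_iUnion.1 hz
    obtain ⟨hkz, hzk⟩ := hlen k z hk
    have hz0 : z.length ≠ 0 := ((Nat.two_pow_pos k).trans_le hkz).ne'
    obtain ⟨e, he⟩ := Nat.exists_eq_add_of_le (Nat.le_log_of_pow_le one_lt_two hkz)
    have hE : 2 ^ e < E := by
      have := (Nat.pow_log_le_self 2 hz0).trans_lt hzk
      rw [he, pow_add, mul_comm] at this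
      exact Nat.lt_of_mul_lt_mul_right this
    have heE : e < 2 ^ e := Nat.lt_two_pow_self
    have hks : k ∈ scales := Finset.mem_Icc.2 ⟨by omega, by omega⟩
    exact ⟨Set.mem_iUnion.2 ⟨⟨k, hks⟩, hk⟩, rfl⟩
  calc complexity (⋃ k, Z k) l
      ≤ complexity (⋃ k : scales, Z k) l :=
        Set.ncard_le_ncard hscales (finite_words_of_length _ l)
    _ ≤ Nat.card scales * K := complexity_iUnion_le _ fun k => hK k l
    _ ≤ (E + 1) * K := by
        gcongr
        rw [Nat.card_eq_fintype_card, Fintype.card_coe, Nat.card_Icc]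
        omega

lemma exists_dyadic_scale {B n : ℕ} (hB : 0 < B) (hn : B ≤ n) :
    ∃ k, B * 2 ^ k ≤ n ∧ n < 2 * B * 2 ^ k := by
  refine ⟨Nat.log 2 (n / B), ?_, ?_⟩
  · rw [mul_comm, ← Nat.le_div_iff_mul_le hB]
    exact Nat.pow_log_le_self 2 (Nat.div_pos hn hB).ne'
  · have := Nat.lt_pow_succ_log_self one_lt_two (n / B)
    rw [Nat.div_lt_iff_lt_mul hB, pow_succ] at this
    linarith

theorem exists_subset_powL_two_of_dyadic {F : Set (List A)} {B : ℕ} (hB : 0 < B)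
    (hlen : ∀ k, ∀ z ∈ Z k, 2 ^ k ≤ z.length ∧ z.length < E * 2 ^ k)
    (hK : ∀ k l, complexity (Z k) l ≤ K)
    (hF : ∀ k, ∀ f ∈ F, B * 2 ^ k ≤ f.length → f.length < 2 * B * 2 ^ k → f ∈ powL (Z k) 2) :
    ∃ S : Set (List A), (∃ C, ∀ n, complexity S n ≤ C) ∧ F ⊆ powL S 2 := by
  let short := {w : List A | w.length < B}
  have hshort (l : ℕ) : complexity short l ≤ short.ncard :=
    Set.ncard_le_ncard (Set.sep_subset _ _) (List.finite_length_lt A B)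
  refine ⟨short ∪ ⋃ k, Z k, ⟨short.ncard + (E + 1) * K, fun l => ?_⟩, fun f hf => ?_⟩
  · exact (complexity_union_le _ _ l).trans
      (Nat.add_le_add (hshort l) (complexity_iUnion_dyadic_le hlen hK l))
  · rcases lt_or_ge f.length B with hfB | hfB
    · exact mem_powL_two.2 ⟨f, Or.inl hfB, [], Or.inl hB, (List.append_nil f).symm⟩
    · obtain ⟨k, hBk, hkB⟩ := exists_dyadic_scale hB hfB
      exact powL_two_mono ((Set.subset_iUnion Z k).trans Set.subset_union_right)
        (hF k f hf hBk hkB)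

end Dyadic

section LinearComplexity

variable [Finite A] {x : ℕ → A} {C : ℕ}

theorem exists_subset_powL_two_of_markerSet {D K : ℕ} {M : Set (List A)} (hD : 0 < D)
    (hC : ∀ n, 1 ≤ n → complexity (Fac x) n ≤ C * n) (hM : MarkerSet D M (Fac x))
    (hK : ∀ n, complexity M n ≤ K) :
    ∃ S : Set (List A), (∃ C, ∀ n, complexity S n ≤ C) ∧ Fac x ⊆ powL S 2 := by
  choose Z hlen hcompl hcut using fun k =>
    exists_cut_of_markerSet hC hM hK (Nat.two_pow_pos k)
  refine exists_subset_powL_two_of_dyadic (B := 2 * D) (by omega) hlen hcompl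
    fun k f hf hDf hfD => hcut k f hf hDf ?_
  linarith

theorem exists_subset_powL_two_of_linear_complexity
    (hC : ∀ n, 1 ≤ n → complexity (Fac x) n ≤ C * n) :
    ∃ S : Set (List A), (∃ C, ∀ n, complexity S n ≤ C) ∧ Fac x ⊆ powL S 2 := by
  by_cases hx : UltimatelyPeriodic x
  · refine ⟨Fac x, exists_complexity_Fac_le_of_ultimatelyPeriodic hx, fun f hf => ?_⟩
    exact mem_powL_two.2 ⟨f, hf, [], wordSeg_mem_Fac x 0 0, (List.append_nil f).symm⟩
  · obtain ⟨M, hM, hK⟩ := exists_markerSet hC hx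
    exact exists_subset_powL_two_of_markerSet (Nat.succ_pos _) hC hM hK

end LinearComplexity

/-- `p_x(n) = O(n)` iff `Fac(x) ⊆ S²` for some language `S` of
bounded complexity. -/
theorem stmt0 (A : Type u) [Fintype A] [Nonempty A] (x : ℕ → A) :
    (∃ C : ℝ, ∀ n : ℕ, 1 ≤ n → (complexity (Fac x) n : ℝ) ≤ C * n) ↔
    (∃ S : Set (List A), (∃ C : ℕ, ∀ n : ℕ, complexity S n ≤ C) ∧ Fac x ⊆ powL S 2) := by
  constructor
  · rintro ⟨C, hC⟩
    refine exists_subset_powL_two_of_linear_complexity (C := ⌈C⌉₊) fun n hn => ?_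
    have hceil : C * n ≤ (⌈C⌉₊ : ℝ) * n := by
      gcongr
      exact Nat.le_ceil C
    exact_mod_cast (hC n hn).trans hceil
  · rintro ⟨S, ⟨C, hC⟩, hS⟩
    refine ⟨2 * (C * C), fun n hn => ?_⟩
    have hsquare := complexity_le_of_subset_powL_two hC hS n
    have hlinear : (n + 1) * (C * C) ≤ 2 * (C * C) * n := by nlinarith [Nat.zero_le (C * C)]
    exact_mod_cast hsquare.trans hlinear
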